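/- Asymptotic Markov chain at the first hop: under the K-hop change of measure with liminf_{n→∞} Δ_k > 0, and with U₁ := (M̃₁, Ỹ₀^{T−1},…,Ỹ_k^{T−1}, T) and Ỹ_ℓ := Ỹ_{ℓ,T}, one has lim_{n→∞} I(Ỹ₁,…,Ỹ_k; U₁ | Ỹ₀) = 0; in particular lim_{n→∞} I(U₁; Ỹ₁ | Ỹ₀) = 0. -/

import Mathlib

open Filter

noncomputable section

/-- `p` is a probability mass function on the finite alphabet `α`. -/
def IsPMF {α : Type*} [Fintype α] (p : α → ℝ) : Prop :=
  (∀ a, 0 ≤ p a) ∧ ∑ a, p a = 1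

open Classical in
/-- Probability that the random variable `X` takes the value `a`, under the pmf `p`. -/
def probEq {Ω α : Type*} [Fintype Ω] (p : Ω → ℝ) (X : Ω → α) (a : α) : ℝ :=
  ∑ ω, if X ω = a then p ω else 0

/-- Shannon entropy (base 2) of the random variable `X` under the pmf `p`. -/
def entOf {Ω α : Type*} [Fintype Ω] (p : Ω → ℝ) (X : Ω → α) : ℝ :=
  -∑ ω, p ω * Real.logb 2 (probEq p X (X ω))

/-- Conditional Shannon entropy `H(X | Y)` under the pmf `p`. -/
def condEntOf {Ω α β : Type*} [Fintype Ω] (p : Ω → ℝ) (X : Ω → α) (Y : Ω → β) : ℝ :=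
  entOf p (fun ω => (X ω, Y ω)) - entOf p Y

/-- Mutual information `I(X ; Y)` under the pmf `p`. -/
def miOf {Ω α β : Type*} [Fintype Ω] (p : Ω → ℝ) (X : Ω → α) (Y : Ω → β) : ℝ :=
  entOf p X + entOf p Y - entOf p (fun ω => (X ω, Y ω))

/-- Conditional mutual information `I(X ; Y | Z)` under the pmf `p`. -/
def condMIOf {Ω α β γ : Type*} [Fintype Ω] (p : Ω → ℝ) (X : Ω → α) (Y : Ω → β)
    (Z : Ω → γ) : ℝ :=
  condEntOf p X Z + condEntOf p Y Z - condEntOf p (fun ω => (X ω, Y ω)) Z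

open Classical in
/-- Probability of the set `S` under the pmf `p`. -/
def probSet {Ω : Type*} [Fintype Ω] (p : Ω → ℝ) (S : Set Ω) : ℝ :=
  ∑ ω, if ω ∈ S then p ω else 0

open Classical in
/-- Number of occurrences of the symbol `a` in the sequence `w`. -/
def Ncount {W : Type*} {n : ℕ} (w : Fin n → W) (a : W) : ℕ :=
  (Finset.univ.filter (fun i => w i = a)).card

/-- The strongly typical set `T_μ⁽ⁿ⁾(P)`. -/
def typicalSet {W : Type*} [Fintype W] (P : W → ℝ) (μ : ℝ) (n : ℕ) : Set (Fin n → W) :=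
  {w | ∀ a, |((Ncount w a : ℝ)) / n - P a| ≤ μ ∧ (P a = 0 → Ncount w a = 0)}

/-- The typicality parameter `μ_n = n^{-1/3}`. -/
def μseq (n : ℕ) : ℝ := (n : ℝ) ^ (-(1/3 : ℝ))

section KHop

variable (k : ℕ) (Y : ℕ → Type) [∀ i, Fintype (Y i)] [∀ i, Nonempty (Y i)]

/-- The index `j` viewed as an element of `Fin (k+1)`. -/
def idxLo (j : Fin k) : Fin (k + 1) := ⟨(j : ℕ), Nat.lt_succ_of_lt j.isLt⟩

/-- The index `j+1` viewed as an element of `Fin (k+1)`. -/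
def idxHi (j : Fin k) : Fin (k + 1) := ⟨(j : ℕ) + 1, Nat.succ_lt_succ j.isLt⟩

variable (P : (∀ i : Fin (k + 1), Y i) → ℝ)

/-- The i.i.d. law of the source tuple `(Y₀ⁿ,…,Y_kⁿ)` under hypothesis `H = 0`. -/
def iidK (n : ℕ) (ys : ∀ i : Fin (k + 1), Fin n → Y i) : ℝ :=
  ∏ t : Fin n, P (fun i => ys i t)

open Classical in
/-- The marginal pmf of `Y_i` under `P`. -/
def margK (i : Fin (k + 1)) (c : Y i) : ℝ :=
  ∑ y : ∀ i : Fin (k + 1), Y i, if y i = c then P y else 0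

/-- The product of the marginals `P_{Y₀}·P_{Y₁}⋯P_{Y_k}`. -/
def prodMargK (y : ∀ i : Fin (k + 1), Y i) : ℝ := ∏ i, margK k Y P i (y i)

/-- The i.i.d. law of the source tuple under hypothesis `H = 1` (product of marginals). -/
def iidQK (n : ℕ) (ys : ∀ i : Fin (k + 1), Fin n → Y i) : ℝ :=
  ∏ t : Fin n, prodMargK k Y P (fun i => ys i t)

open Classical in
/-- The pairwise marginal `P_{Y_j Y_{j+1}}` of `P`. -/
def pairMargK (j : Fin k) (a : Y (j : ℕ)) (b : Y ((j : ℕ) + 1)) : ℝ :=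
  ∑ y : ∀ i : Fin (k + 1), Y i, if y (idxLo k j) = a ∧ y (idxHi k j) = b then P y else 0

open Classical in
/-- `P` forms the Markov chain `Y₀ → Y₁ → ⋯ → Y_k`. -/
def IsMarkovChainK : Prop :=
  ∀ y : ∀ i : Fin (k + 1), Y i,
    P y * ∏ i ∈ Finset.univ.filter (fun i : Fin (k + 1) => 0 < (i : ℕ) ∧ (i : ℕ) < k),
        margK k Y P i (y i)
      = ∏ j : Fin k, pairMargK k Y P j (y (idxLo k j)) (y (idxHi k j))

/-- Extension of a source tuple to all natural indices (junk beyond `k`). -/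
def extendTup (n : ℕ) (ys : ∀ i : Fin (k + 1), Fin n → Y i) (ℓ : ℕ) : Fin n → Y ℓ :=
  if h : ℓ < k + 1 then ys ⟨ℓ, h⟩ else fun _ => Classical.arbitrary (Y ℓ)

/-- The messages computed recursively from the encoders:
`msgRec φ ys' ℓ` is the message `M_{ℓ+1}`. -/
def msgRec (n : ℕ) (φ : ∀ ℓ : ℕ, (Fin n → Y ℓ) → ℕ → ℕ)
    (ys' : ∀ ℓ : ℕ, Fin n → Y ℓ) : ℕ → ℕ
  | 0 => φ 0 (ys' 0) 0
  | (ℓ + 1) => φ (ℓ + 1) (ys' (ℓ + 1)) (msgRec n φ ys' ℓ)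

/-- A source tuple viewed as one sequence over the product alphabet. -/
def tupleSeq {n : ℕ} (ys : ∀ i : Fin (k + 1), Fin n → Y i) :
    Fin n → (∀ i : Fin (k + 1), Y i) :=
  fun t i => ys i t

/-- The acceptance region `A_k` of the decision center `R_k`: the tuples on which the
guess is `Ĥ_k = 0` (decision `false`). -/
def acceptSet (n : ℕ) (φ : ∀ ℓ : ℕ, (Fin n → Y ℓ) → ℕ → ℕ)
    (g : (Fin n → Y k) → ℕ → Bool) : Set (∀ i : Fin (k + 1), Fin n → Y i) :=
  {ys | g (extendTup k Y n ys k) (msgRec Y n φ (extendTup k Y n ys) (k - 1)) = false}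

/-- The set `D_k`: the acceptance region intersected with the strongly typical set. -/
def DsetCM (n : ℕ) (φ : ∀ ℓ : ℕ, (Fin n → Y ℓ) → ℕ → ℕ)
    (g : (Fin n → Y k) → ℕ → Bool) : Set (∀ i : Fin (k + 1), Fin n → Y i) :=
  acceptSet k Y n φ g ∩ {ys | tupleSeq k Y ys ∈ typicalSet P (μseq n) n}

/-- `Δ_k = Pr[(Y₀ⁿ,…,Y_kⁿ) ∈ D_k]` under `H = 0`. -/
def DeltaCM (n : ℕ) (φ : ∀ ℓ : ℕ, (Fin n → Y ℓ) → ℕ → ℕ)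
    (g : (Fin n → Y k) → ℕ → Bool) : ℝ :=
  probSet (iidK k Y P n) (DsetCM k Y P n φ g)

open Classical in
/-- The change-of-measure pmf of `(Ỹ₀ⁿ,…,Ỹ_kⁿ)`: the `H = 0` law conditioned on `D_k`. -/
def ptildeCM (n : ℕ) (φ : ∀ ℓ : ℕ, (Fin n → Y ℓ) → ℕ → ℕ)
    (g : (Fin n → Y k) → ℕ → Bool) (ys : ∀ i : Fin (k + 1), Fin n → Y i) : ℝ :=
  if ys ∈ DsetCM k Y P n φ g then iidK k Y P n ys / DeltaCM k Y P n φ g else 0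

/-- The pmf of `((Ỹ₀ⁿ,…,Ỹ_kⁿ), T)` with `T` uniform on `{1,…,n}` independent of the rest. -/
def pfullCM (n : ℕ) (φ : ∀ ℓ : ℕ, (Fin n → Y ℓ) → ℕ → ℕ)
    (g : (Fin n → Y k) → ℕ → Bool)
    (ω : (∀ i : Fin (k + 1), Fin n → Y i) × Fin n) : ℝ :=
  ptildeCM k Y P n φ g ω.1 / n

/-- The random variable `M̃_{j+1}` (the message of hop `j+1` applied to the tilde sources). -/
def MtilRV (n : ℕ) (φ : ∀ ℓ : ℕ, (Fin n → Y ℓ) → ℕ → ℕ) (j : ℕ)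
    (ω : (∀ i : Fin (k + 1), Fin n → Y i) × Fin n) : ℕ :=
  msgRec Y n φ (extendTup k Y n ω.1) j

open Classical in
/-- The prefixes `(Ỹ₀^{T−1},…,Ỹ_k^{T−1})` as a random variable. -/
def prefixAll (n : ℕ) (ω : (∀ i : Fin (k + 1), Fin n → Y i) × Fin n) :
    ∀ i : Fin (k + 1), Fin n → Option (Y i) :=
  fun i t => if (t : ℕ) < (ω.2 : ℕ) then some (ω.1 i t) else none

/-- The auxiliary random variable `U_{j+1} := (M̃_{j+1}, Ỹ₀^{T−1},…,Ỹ_k^{T−1}, T)`. -/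
def UvarCM (n : ℕ) (φ : ∀ ℓ : ℕ, (Fin n → Y ℓ) → ℕ → ℕ) (j : ℕ)
    (ω : (∀ i : Fin (k + 1), Fin n → Y i) × Fin n) :
    ℕ × (∀ i : Fin (k + 1), Fin n → Option (Y i)) × Fin n :=
  (MtilRV k Y n φ j ω, prefixAll k Y n ω, ω.2)

/-- The type-I error probability `α_{k,n} = Pr[Ĥ_k = 1 | H = 0]`. -/
def alphaCM (n : ℕ) (φ : ∀ ℓ : ℕ, (Fin n → Y ℓ) → ℕ → ℕ)
    (g : (Fin n → Y k) → ℕ → Bool) : ℝ :=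
  probSet (iidK k Y P n) ((acceptSet k Y n φ g)ᶜ)

/-- The type-II error probability `β_{k,n} = Pr[Ĥ_k = 0 | H = 1]`. -/
def betaCM (n : ℕ) (φ : ∀ ℓ : ℕ, (Fin n → Y ℓ) → ℕ → ℕ)
    (g : (Fin n → Y k) → ℕ → Bool) : ℝ :=
  probSet (iidQK k Y P n) (acceptSet k Y n φ g)

end KHop

lemma gibbs_master {Ω : Type*} [Fintype Ω] (p r g : Ω → ℝ) (hp : ∀ ω, 0 ≤ p ω)
    (hr : ∀ ω, 0 < p ω → 0 < r ω ∧ p ω ≤ g ω * r ω) (hg0 : ∀ ω, 0 ≤ g ω)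
    (hg : ∑ ω, g ω ≤ ∑ ω, p ω) : 0 ≤ ∑ ω, p ω * Real.logb 2 (r ω) := by
  have h2 : 0 < Real.log 2 := Real.log_pos (by norm_num)
  have h : ∑ ω, p ω * Real.logb 2 (r ω) = (∑ ω, p ω * Real.log (r ω)) / Real.log 2 := by
    rw [Finset.sum_div]
    refine Finset.sum_congr rfl fun ω _ => ?_
    rw [Real.logb, mul_div_assoc]
  rw [h]
  apply div_nonneg _ h2.le
  have : ∑ ω, (p ω - g ω) ≤ ∑ ω, p ω * Real.log (r ω) := by
    refine Finset.sum_le_sum fun ω _ => ?_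
    rcases (hp ω).eq_or_lt with h0 | h0
    · rw [← h0]; simpa using hg0 ω
    · obtain ⟨hr0, hle⟩ := hr ω h0
      have h1 := Real.one_sub_inv_le_log_of_pos hr0
      have h3 : p ω * (1 - (r ω)⁻¹) ≤ p ω * Real.log (r ω) := mul_le_mul_of_nonneg_left h1 h0.le
      have h4 : p ω * (r ω)⁻¹ ≤ g ω := by
        rw [← div_eq_mul_inv, div_le_iff₀ hr0]; exact hle
      linarith
  rw [Finset.sum_sub_distrib] at this
  linarith

lemma probEq_nonneg {Ω α : Type*} [Fintype Ω] (p : Ω → ℝ) (hp : ∀ ω, 0 ≤ p ω) (X : Ω → α)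
    (a : α) : 0 ≤ probEq p X a := by
  unfold probEq
  refine Finset.sum_nonneg fun ω _ => ?_
  split_ifs
  · exact hp ω
  · exact le_rfl

lemma probEq_ge {Ω α : Type*} [Fintype Ω] (p : Ω → ℝ) (hp : ∀ ω, 0 ≤ p ω) (X : Ω → α)
    (ω : Ω) : p ω ≤ probEq p X (X ω) := by
  classical
  unfold probEq
  have := Finset.single_le_sum (f := fun ω' => if X ω' = X ω then p ω' else 0)
    (fun i _ => by split_ifs <;> simp [hp]) (Finset.mem_univ ω)
  simp only [if_true] at this
  convert this

open Classical in
lemma sum_probEq_pair {Ω α β : Type*} [Fintype Ω] (p : Ω → ℝ)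
    (X : Ω → α) (Z : Ω → β) (S : Finset α) (hS : ∀ ω, X ω ∈ S) (z : β) :
    ∑ x ∈ S, probEq p (fun ω => (X ω, Z ω)) (x, z) = probEq p Z z := by
  unfold probEq
  rw [Finset.sum_comm]
  refine Finset.sum_congr rfl fun ω _ => ?_
  simp only [Prod.mk.injEq, ite_and]
  rw [Finset.sum_ite_eq]
  simp [hS]

open Classical in
lemma sum_probEq {Ω β : Type*} [Fintype Ω] (p : Ω → ℝ)
    (Z : Ω → β) (S : Finset β) (hS : ∀ ω, Z ω ∈ S) :
    ∑ z ∈ S, probEq p Z z = ∑ ω, p ω := by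
  unfold probEq
  rw [Finset.sum_comm]
  refine Finset.sum_congr rfl fun ω _ => ?_
  rw [Finset.sum_ite_eq]
  simp [hS]

/-- Summing `f(X)/p(X)` against `p` is at most summing `f` over the values. -/
lemma sum_div_probEq {Ω α : Type*} [Fintype Ω] (p : Ω → ℝ)
    (X : Ω → α) (S : Finset α) (hS : ∀ ω, X ω ∈ S) (f : α → ℝ) (hf : ∀ a, 0 ≤ f a) :
    ∑ ω, p ω * f (X ω) / probEq p X (X ω) ≤ ∑ a ∈ S, f a := by
  classical
  have h : ∀ ω, p ω * f (X ω) / probEq p X (X ω)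
      = ∑ a ∈ S, (if X ω = a then p ω else 0) * f a / probEq p X a := by
    intro ω
    rw [Finset.sum_eq_single (X ω)]
    · simp
    · intro b _ hb; simp [Ne.symm hb]
    · intro h; exact absurd (hS ω) h
  simp_rw [h]
  rw [Finset.sum_comm]
  refine Finset.sum_le_sum fun a _ => ?_
  rw [← Finset.sum_div, ← Finset.sum_mul]
  have : ∑ ω, (if X ω = a then p ω else 0) = probEq p X a := by
    unfold probEq
    exact Finset.sum_congr rfl fun ω _ => by congr
  rw [this]
  by_cases h0 : probEq p X a = 0
  · rw [h0]; simpa using hf a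
  · rw [mul_div_assoc, mul_comm, div_mul_cancel₀ _ h0]

lemma entOf_congr {Ω α β : Type*} [Fintype Ω] (p : Ω → ℝ) (X : Ω → α) (X' : Ω → β)
    (h : ∀ ω ω', X ω = X ω' ↔ X' ω = X' ω') : entOf p X = entOf p X' := by
  have : ∀ ω, probEq p X (X ω) = probEq p X' (X' ω) := by
    intro ω
    unfold probEq
    refine Finset.sum_congr rfl fun ω' _ => ?_
    by_cases hh : X ω' = X ω
    · rw [if_pos hh, if_pos ((h _ _).1 hh)]
    · rw [if_neg hh, if_neg (fun h' => hh ((h _ _).2 h'))]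
  unfold entOf
  simp only [this]

/-- Submodularity: conditional mutual information is nonnegative. -/
lemma condMI_nonneg {Ω α β γ : Type*} [Fintype Ω] (p : Ω → ℝ) (hp : ∀ ω, 0 ≤ p ω)
    (X : Ω → α) (Y : Ω → β) (Z : Ω → γ) : 0 ≤ condMIOf p X Y Z := by
  classical
  set pz := probEq p Z with hpz
  set pxz := probEq p (fun ω => (X ω, Z ω)) with hpxz
  set pyz := probEq p (fun ω => (Y ω, Z ω)) with hpyz
  set pxyz := probEq p (fun ω => ((X ω, Y ω), Z ω)) with hpxyz
  have n1 : ∀ a, 0 ≤ pz a := probEq_nonneg p hp _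
  have n2 : ∀ a, 0 ≤ pxz a := probEq_nonneg p hp _
  have n3 : ∀ a, 0 ≤ pyz a := probEq_nonneg p hp _
  have n4 : ∀ a, 0 ≤ pxyz a := probEq_nonneg p hp _
  have e1 : ∀ ω, p ω ≤ pz (Z ω) := probEq_ge p hp _
  have e2 : ∀ ω, p ω ≤ pxz (X ω, Z ω) := probEq_ge p hp (fun ω => (X ω, Z ω))
  have e3 : ∀ ω, p ω ≤ pyz (Y ω, Z ω) := probEq_ge p hp (fun ω => (Y ω, Z ω))
  have e4 : ∀ ω, p ω ≤ pxyz ((X ω, Y ω), Z ω) := probEq_ge p hp (fun ω => ((X ω, Y ω), Z ω))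
  have key := gibbs_master p
    (fun ω => pxyz ((X ω, Y ω), Z ω) * pz (Z ω) / (pxz (X ω, Z ω) * pyz (Y ω, Z ω)))
    (fun ω => p ω * (pxz (X ω, Z ω) * pyz (Y ω, Z ω) / pz (Z ω)) / pxyz ((X ω, Y ω), Z ω))
    hp ?_ ?_ ?_
  · have : condMIOf p X Y Z = ∑ ω, p ω *
        Real.logb 2 (pxyz ((X ω, Y ω), Z ω) * pz (Z ω) / (pxz (X ω, Z ω) * pyz (Y ω, Z ω))) := by
      unfold condMIOf condEntOf entOf
      rw [← hpz, ← hpxz, ← hpyz, ← hpxyz]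
      have : ∀ a b c d : ℝ, -a - -d + (-b - -d) - (-c - -d) = c + d - a - b := by intros; ring
      rw [this, ← Finset.sum_add_distrib, ← Finset.sum_sub_distrib, ← Finset.sum_sub_distrib]
      refine Finset.sum_congr rfl fun ω _ => ?_
      rcases (hp ω).eq_or_lt with h0 | h0
      · rw [← h0]; simp
      · have := (h0.trans_le (e1 ω)).ne'
        have := (h0.trans_le (e2 ω)).ne'
        have := (h0.trans_le (e3 ω)).ne'
        have := (h0.trans_le (e4 ω)).ne'
        rw [Real.logb_div (by positivity) (by positivity), Real.logb_mul (by assumption) (by assumption),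
          Real.logb_mul (by assumption) (by assumption)]
        ring
    rw [this]; exact key
  · intro ω h0
    have := (h0.trans_le (e1 ω))
    have := (h0.trans_le (e2 ω))
    have := (h0.trans_le (e3 ω))
    have := (h0.trans_le (e4 ω))
    refine ⟨by positivity, le_of_eq ?_⟩
    field_simp
  · intro ω
    have := hp ω
    have := n1 (Z ω)
    have := n2 (X ω, Z ω)
    have := n3 (Y ω, Z ω)
    have := n4 ((X ω, Y ω), Z ω)
    positivity
  · set SX := Finset.univ.image X
    set SY := Finset.univ.image Y
    set SZ := Finset.univ.image Z
    have hX : ∀ ω, X ω ∈ SX := fun ω => Finset.mem_image_of_mem _ (Finset.mem_univ _)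
    have hY : ∀ ω, Y ω ∈ SY := fun ω => Finset.mem_image_of_mem _ (Finset.mem_univ _)
    have hZ : ∀ ω, Z ω ∈ SZ := fun ω => Finset.mem_image_of_mem _ (Finset.mem_univ _)
    refine (sum_div_probEq p (fun ω => ((X ω, Y ω), Z ω)) ((SX ×ˢ SY) ×ˢ SZ)
      (fun ω => by simp [hX, hY, hZ, -Finset.mem_image])
      (fun a => pxz (a.1.1, a.2) * pyz (a.1.2, a.2) / pz a.2)
      (fun a => div_nonneg (mul_nonneg (n2 _) (n3 _)) (n1 _))).trans ?_
    rw [Finset.sum_product_right, ← sum_probEq p Z SZ hZ]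
    refine Finset.sum_le_sum fun z _ => ?_
    rw [Finset.sum_product]
    dsimp only
    simp_rw [← Finset.sum_div, ← Finset.mul_sum]
    rw [hpyz, sum_probEq_pair p Y Z SY hY, ← Finset.sum_mul, hpxz, sum_probEq_pair p X Z SX hX,
      ← hpz]
    rw [mul_self_div_self]

/-- Cross-entropy bound. -/
lemma cross_ent {Ω α β : Type*} [Fintype Ω] [Fintype α] [Fintype β] (p : Ω → ℝ)
    (hp : ∀ ω, 0 ≤ p ω)
    (X : Ω → α) (Z : Ω → β) (Q : α → β → ℝ) (hQ : ∀ a b, 0 ≤ Q a b) (hQ1 : ∀ a, ∑ b, Q a b ≤ 1)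
    (hpos : ∀ ω, 0 < p ω → 0 < Q (X ω) (Z ω)) :
    0 ≤ ∑ ω, p ω * (Real.logb 2 (probEq p (fun ω => (Z ω, X ω)) (Z ω, X ω))
      - Real.logb 2 (probEq p X (X ω)) - Real.logb 2 (Q (X ω) (Z ω))) := by
  classical
  set px := probEq p X with hpx
  set pzx := probEq p (fun ω => (Z ω, X ω)) with hpzx
  have n1 : ∀ a, 0 ≤ px a := probEq_nonneg p hp _
  have n2 : ∀ a, 0 ≤ pzx a := probEq_nonneg p hp _
  have e1 : ∀ ω, p ω ≤ px (X ω) := probEq_ge p hp _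
  have e2 : ∀ ω, p ω ≤ pzx (Z ω, X ω) := probEq_ge p hp (fun ω => (Z ω, X ω))
  have key := gibbs_master p
    (fun ω => pzx (Z ω, X ω) / px (X ω) / Q (X ω) (Z ω))
    (fun ω => p ω * (Q (X ω) (Z ω) * px (X ω)) / pzx (Z ω, X ω)) hp ?_ ?_ ?_
  · refine key.trans_eq (Finset.sum_congr rfl fun ω _ => ?_)
    rcases (hp ω).eq_or_lt with h0 | h0
    · rw [← h0]; simp
    · have := (h0.trans_le (e1 ω)).ne'
      have := (h0.trans_le (e2 ω)).ne'
      have := (hpos ω h0).ne'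
      rw [Real.logb_div (by positivity) (by positivity), Real.logb_div (by positivity) (by positivity)]
  · intro ω h0
    have := (h0.trans_le (e1 ω))
    have := (h0.trans_le (e2 ω))
    have := (hpos ω h0)
    refine ⟨by positivity, le_of_eq ?_⟩
    field_simp
  · intro ω
    have := hp ω
    have := n1 (X ω)
    have := n2 (Z ω, X ω)
    have := hQ (X ω) (Z ω)
    positivity
  · refine (sum_div_probEq p (fun ω => (Z ω, X ω)) Finset.univ
      (fun ω => Finset.mem_univ _)
      (fun a => Q a.2 a.1 * px a.2)
      (fun a => mul_nonneg (hQ _ _) (n1 _))).trans ?_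
    rw [← sum_probEq p X Finset.univ (fun _ => Finset.mem_univ _), Fintype.sum_prod_type_right]
    refine Finset.sum_le_sum fun x _ => ?_
    dsimp only
    rw [← Finset.sum_mul]
    exact mul_le_of_le_one_left (n1 x) (hQ1 x)

/-- A product of causal sub-kernels sums to at most one. -/
lemma causal_sum {β : Type*} [Fintype β] : ∀ (n : ℕ) (K : Fin n → (Fin n → β) → ℝ)
    (_ : ∀ t z, 0 ≤ K t z)
    (_ : ∀ t z z', (∀ s, s ≤ t → z s = z' s) → K t z = K t z')
    (_ : ∀ t z, ∑ b, K t (Function.update z t b) ≤ 1),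
    ∑ z, ∏ t, K t z ≤ 1 := by
  intro n
  induction n with
  | zero => intro K _ _ _; simp
  | succ n ih =>
    intro K h0 hc h1
    rw [← (Fin.consEquiv (fun _ => β)).sum_comp, Fintype.sum_prod_type]
    rcases isEmpty_or_nonempty (Fin n → β) with he | ⟨⟨z0⟩⟩
    · simp
    rcases isEmpty_or_nonempty β with he | ⟨⟨b0⟩⟩
    · simp
    calc _ ≤ ∑ b, K 0 (Fin.cons b z0) := by
          refine Finset.sum_le_sum fun b _ => ?_
          have : ∀ z : Fin n → β, ∏ t, K t ((Fin.consEquiv (fun _ => β)) (b, z))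
              = K 0 (Fin.cons b z0) * ∏ t : Fin n, K t.succ (Fin.cons b z) := by
            intro z
            rw [Fin.prod_univ_succ]
            congr 1
            apply hc
            intro s hs
            have : s = 0 := by simpa using hs
            subst this
            simp [Fin.consEquiv]
          simp_rw [this, ← Finset.mul_sum]
          refine mul_le_of_le_one_right (h0 _ _) (ih (fun t z => K t.succ (Fin.cons b z)) ?_ ?_ ?_)
          · intro t z; exact h0 _ _
          · intro t z z' h
            apply hc
            intro s hs
            induction s using Fin.cases with
            | zero => simp
            | succ s => simpa using h s (by simpa using hs)
          · intro t z
            simp_rw [Fin.cons_update]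
            exact h1 _ _
      _ = ∑ b, K 0 (Function.update (Fin.cons b0 z0) 0 b) := by
          simp [Fin.update_cons_zero]
      _ ≤ 1 := h1 _ _

/-- The main abstract bound. -/
lemma core_bound {Ω₀ α β υ : Type*} [Fintype Ω₀] [Fintype α] [Fintype β] (n : ℕ) (hn : 0 < n)
    (e : Ω₀ ≃ (Fin n → α) × (Fin n → β))
    (p0 : Ω₀ → ℝ) (hp0 : ∀ ω, 0 ≤ p0 ω) (hp1 : ∑ ω, p0 ω = 1)
    (P : α → β → ℝ) (hP0 : ∀ a b, 0 ≤ P a b) (hP1 : ∑ a, ∑ b, P a b = 1)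
    (C : ℝ) (hC : 0 < C) (hle : ∀ ω, p0 ω ≤ C * ∏ t, P ((e ω).1 t) ((e ω).2 t))
    (V : (Fin n → α) → (Fin n → β) → Fin n → υ)
    (hV : ∀ x z z' t, (∀ s, s < t → z s = z' s) → V x z t = V x z' t) :
    condMIOf (fun ω : Ω₀ × Fin n => p0 ω.1 / n)
      (fun ω => (e ω.1).2 ω.2) (fun ω => V (e ω.1).1 (e ω.1).2 ω.2) (fun ω => (e ω.1).1 ω.2)
      ≤ Real.logb 2 C / n := by
  classical
  have hn' : (0 : ℝ) < n := by exact_mod_cast hn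
  set p : Ω₀ × Fin n → ℝ := fun ω => p0 ω.1 / n with hpdef
  set X : Ω₀ × Fin n → α := fun ω => (e ω.1).1 ω.2 with hX
  set Z : Ω₀ × Fin n → β := fun ω => (e ω.1).2 ω.2 with hZ
  set U : Ω₀ × Fin n → υ := fun ω => V (e ω.1).1 (e ω.1).2 ω.2 with hU
  have hp : ∀ ω, 0 ≤ p ω := fun ω => div_nonneg (hp0 _) hn'.le
  set PX : α → ℝ := fun a => ∑ b, P a b with hPX
  have hPX0 : ∀ a, 0 ≤ PX a := fun a => Finset.sum_nonneg fun b _ => hP0 a b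
  have hPle : ∀ a b, P a b ≤ PX a := fun a b =>
    Finset.single_le_sum (f := fun b => P a b) (fun b _ => hP0 a b) (Finset.mem_univ b)
  set Q : α → β → ℝ := fun a b => P a b / PX a with hQ
  have hQ0 : ∀ a b, 0 ≤ Q a b := fun a b => div_nonneg (hP0 _ _) (hPX0 _)
  have hQ1 : ∀ a, ∑ b, Q a b ≤ 1 := by
    intro a
    rw [hQ]; dsimp only
    rw [← Finset.sum_div]
    exact div_self_le_one _
  have hPpos : ∀ ω, 0 < p0 ω → ∀ t, 0 < P ((e ω).1 t) ((e ω).2 t) := by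
    intro ω h t
    have h1 : 0 < C * ∏ t, P ((e ω).1 t) ((e ω).2 t) := h.trans_le (hle ω)
    have h2 : ∏ t, P ((e ω).1 t) ((e ω).2 t) ≠ 0 := by
      intro h; rw [h] at h1; simp at h1
    exact lt_of_le_of_ne (hP0 _ _) (Ne.symm (Finset.prod_ne_zero_iff.mp h2 t (Finset.mem_univ _)))
  have hPXpos : ∀ ω, 0 < p0 ω → ∀ t, 0 < PX ((e ω).1 t) := fun ω h t =>
    (hPpos ω h t).trans_le (hPle _ _)
  have hQpos : ∀ ω, 0 < p0 ω → ∀ t, 0 < Q ((e ω).1 t) ((e ω).2 t) := fun ω h t =>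
    div_pos (hPpos ω h t) (hPXpos ω h t)
  have hpp : ∀ ω, 0 < p ω → 0 < p0 ω.1 := by
    intro ω h
    have := mul_pos h hn'
    rwa [hpdef, div_mul_cancel₀ _ hn'.ne'] at this
  have hA := cross_ent p hp X Z Q hQ0 hQ1 (fun ω h => hQpos ω.1 (hpp ω h) ω.2)
  set pzux := probEq p (fun ω => ((Z ω, U ω), X ω)) with hpzux
  set pux := probEq p (fun ω => (U ω, X ω)) with hpux
  set pzx := probEq p (fun ω => (Z ω, X ω)) with hpzx
  set px := probEq p X with hpx
  have n1 : ∀ a, 0 ≤ pzux a := probEq_nonneg p hp _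
  have n2 : ∀ a, 0 ≤ pux a := probEq_nonneg p hp _
  have e1 : ∀ ω, p ω ≤ pzux ((Z ω, U ω), X ω) := probEq_ge p hp (fun ω => ((Z ω, U ω), X ω))
  have e2 : ∀ ω, p ω ≤ pux (U ω, X ω) := probEq_ge p hp (fun ω => (U ω, X ω))
  -- the causal kernel
  set K : (Fin n → α) → Fin n → (Fin n → β) → ℝ := fun x t z =>
    pzux ((z t, V x z t), x t) / pux (V x z t, x t) with hK
  have hK0 : ∀ x t z, 0 ≤ K x t z := fun x t z => div_nonneg (n1 _) (n2 _)
  have hKsum : ∀ x, ∑ z, ∏ t, K x t z ≤ 1 := by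
    intro x
    refine causal_sum n (K x) (hK0 x) ?_ ?_
    · intro t z z' h
      simp only [hK]
      rw [hV x z z' t (fun s hs => h s hs.le), h t le_rfl]
    · intro t z
      have : ∀ b, K x t (Function.update z t b)
          = probEq p (fun ω => (Z ω, (U ω, X ω))) (b, (V x z t, x t)) / pux (V x z t, x t) := by
        intro b
        simp only [hK]
        rw [hV x (Function.update z t b) z t (fun s hs => Function.update_of_ne hs.ne _ _),
          Function.update_self, hpzux]
        congr 1
        unfold probEq
        simp only [Prod.mk.injEq, and_assoc]
      simp_rw [this]
      rw [← Finset.sum_div, sum_probEq_pair p Z (fun ω => (U ω, X ω)) Finset.univ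
        (fun _ => Finset.mem_univ _)]
      exact div_self_le_one _
  have hKpos : ∀ ω, 0 < p0 ω → ∀ t, 0 < K (e ω).1 t (e ω).2 := by
    intro ω h t
    have hpos : 0 < p (ω, t) := div_pos h hn'
    exact div_pos (hpos.trans_le (e1 (ω, t))) (hpos.trans_le (e2 (ω, t)))
  have hB := gibbs_master p0
    (fun ω => C * ∏ t, (Q ((e ω).1 t) ((e ω).2 t) / K (e ω).1 t (e ω).2))
    (fun ω => (∏ t, PX ((e ω).1 t)) * ∏ t, K (e ω).1 t (e ω).2) hp0 ?_ ?_ ?_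
  · have hB2 : ∀ ω, p0 ω * Real.logb 2
        (C * ∏ t, (Q ((e ω).1 t) ((e ω).2 t) / K (e ω).1 t (e ω).2))
        = p0 ω * Real.logb 2 C + n * ∑ t, p (ω, t) * (Real.logb 2 (Q (X (ω, t)) (Z (ω, t)))
          - (Real.logb 2 (pzux ((Z (ω, t), U (ω, t)), X (ω, t)))
            - Real.logb 2 (pux (U (ω, t), X (ω, t))))) := by
      intro ω
      rcases (hp0 ω).eq_or_lt with h0 | h0
      · simp [hpdef, ← h0]
      · rw [Real.logb_mul hC.ne' (Finset.prod_ne_zero_iff.mpr fun t _ =>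
          (div_pos (hQpos ω h0 t) (hKpos ω h0 t)).ne'), Real.logb_prod (hf := fun t _ =>
          (div_pos (hQpos ω h0 t) (hKpos ω h0 t)).ne'), mul_add, Finset.mul_sum, Finset.mul_sum]
        congr 1
        refine Finset.sum_congr rfl fun t _ => ?_
        have hpos : 0 < p (ω, t) := div_pos h0 hn'
        rw [Real.logb_div (hQpos ω h0 t).ne' (hKpos ω h0 t).ne']
        have : Real.logb 2 (K (e ω).1 t (e ω).2)
            = Real.logb 2 (pzux ((Z (ω, t), U (ω, t)), X (ω, t)))
            - Real.logb 2 (pux (U (ω, t), X (ω, t))) :=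
          Real.logb_div (hpos.trans_le (e1 (ω, t))).ne' (hpos.trans_le (e2 (ω, t))).ne'
        rw [this]
        simp only [hpdef]
        field_simp
        rfl
    simp_rw [hB2] at hB
    rw [Finset.sum_add_distrib, ← Finset.sum_mul, hp1, ← Finset.mul_sum,
      ← Fintype.sum_prod_type' (f := fun ω t => p (ω, t) * (Real.logb 2 (Q (X (ω, t)) (Z (ω, t)))
          - (Real.logb 2 (pzux ((Z (ω, t), U (ω, t)), X (ω, t)))
            - Real.logb 2 (pux (U (ω, t), X (ω, t))))))] at hB
    have hI : condMIOf p Z U X = -(∑ ω, p ω * (Real.logb 2 (pzx (Z ω, X ω))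
          - Real.logb 2 (px (X ω)) - Real.logb 2 (Q (X ω) (Z ω))))
        - ∑ ω, p ω * (Real.logb 2 (Q (X ω) (Z ω))
          - (Real.logb 2 (pzux ((Z ω, U ω), X ω)) - Real.logb 2 (pux (U ω, X ω)))) := by
      unfold condMIOf condEntOf entOf
      rw [← hpzux, ← hpux, ← hpzx, ← hpx]
      simp only [mul_sub, Finset.sum_sub_distrib]
      ring
    rw [hI, le_div_iff₀ hn']
    simp only [Prod.mk.eta] at hB
    nlinarith
  · intro ω h0
    have hpr : 0 < ∏ t, (Q ((e ω).1 t) ((e ω).2 t) / K (e ω).1 t (e ω).2) :=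
      Finset.prod_pos fun t _ => div_pos (hQpos ω h0 t) (hKpos ω h0 t)
    refine ⟨mul_pos hC hpr, (hle ω).trans_eq ?_⟩
    rw [← Finset.prod_mul_distrib, mul_left_comm, ← Finset.prod_mul_distrib]
    congr 1
    refine Finset.prod_congr rfl fun t _ => ?_
    have h1 := (hKpos ω h0 t).ne'
    have h2 := (hPXpos ω h0 t).ne'
    generalize K (e ω).1 t (e ω).2 = κ at *
    simp only [hQ]
    field_simp
  · intro ω
    exact mul_nonneg (Finset.prod_nonneg fun t _ => hPX0 _) (Finset.prod_nonneg fun t _ => hK0 _ _ _)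
  · rw [hp1, e.sum_comp (fun xz => (∏ t, PX (xz.1 t)) * ∏ t, K xz.1 t xz.2),
      Fintype.sum_prod_type]
    simp_rw [← Finset.mul_sum]
    calc _ ≤ ∑ x : Fin n → α, ∏ t, PX (x t) :=
          Finset.sum_le_sum fun x _ => mul_le_of_le_one_right
            (Finset.prod_nonneg fun t _ => hPX0 _) (hKsum x)
      _ = 1 := by rw [← Fintype.sum_pow, hP1, one_pow]

/-- Data processing for conditional mutual information. -/
lemma condMI_data {Ω α β γ δ : Type*} [Fintype Ω] (p : Ω → ℝ) (hp : ∀ ω, 0 ≤ p ω)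
    (Z : Ω → α) (U : Ω → β) (X : Ω → γ) (f : α → δ) :
    condMIOf p U (fun ω => f (Z ω)) X ≤ condMIOf p Z U X := by
  have h := condMI_nonneg p hp Z U (fun ω => (f (Z ω), X ω))
  have h1 : entOf p (fun ω => (Z ω, (f (Z ω), X ω))) = entOf p (fun ω => (Z ω, X ω)) :=
    entOf_congr _ _ _ (by intro ω ω'; simp only [Prod.mk.injEq]; grind)
  have h2 : entOf p (fun ω => ((Z ω, U ω), (f (Z ω), X ω))) = entOf p (fun ω => ((Z ω, U ω), X ω)) :=
    entOf_congr _ _ _ (by intro ω ω'; simp only [Prod.mk.injEq]; grind)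
  have h3 : entOf p (fun ω => (U ω, (f (Z ω), X ω))) = entOf p (fun ω => ((U ω, f (Z ω)), X ω)) :=
    entOf_congr _ _ _ (by intro ω ω'; simp only [Prod.mk.injEq]; grind)
  unfold condMIOf condEntOf at *
  rw [h1, h2, h3] at h
  linarith

/-- Splitting a source tuple into the first source and the other sources. -/
def splitEquiv (k : ℕ) (Y : ℕ → Type) (n : ℕ) :
    (∀ i : Fin (k + 1), Fin n → Y i) ≃
      (Fin n → Y ((⟨0, Nat.succ_pos k⟩ : Fin (k + 1)) : ℕ)) ×
        (Fin n → ∀ j : Fin k, Y ((idxHi k j : Fin (k + 1)) : ℕ)) where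
  toFun ys := (ys ⟨0, Nat.succ_pos k⟩, fun t j => ys (idxHi k j) t)
  invFun xz := fun i => Fin.cases (motive := fun i => Fin n → Y i) xz.1 (fun j t => xz.2 t j) i
  left_inv ys := by
    funext i
    induction i using Fin.cases <;> rfl
  right_inv xz := rfl

/-- Gluing letters. -/
def glueLetter (k : ℕ) (Y : ℕ → Type) (a : Y ((⟨0, Nat.succ_pos k⟩ : Fin (k + 1)) : ℕ))
    (b : ∀ j : Fin k, Y ((idxHi k j : Fin (k + 1)) : ℕ)) : ∀ i : Fin (k + 1), Y i :=
  fun i => Fin.cases (motive := fun i => Y i) a b i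

/-- Gluing letters, as an equivalence. -/
def glueEquiv (k : ℕ) (Y : ℕ → Type) :
    (Y ((⟨0, Nat.succ_pos k⟩ : Fin (k + 1)) : ℕ)) × (∀ j : Fin k, Y ((idxHi k j : Fin (k + 1)) : ℕ))
      ≃ (∀ i : Fin (k + 1), Y i) where
  toFun ab := glueLetter k Y ab.1 ab.2
  invFun y := (y ⟨0, Nat.succ_pos k⟩, fun j => y (idxHi k j))
  left_inv ab := rfl
  right_inv y := by
    funext i
    induction i using Fin.cases <;> rfl

lemma ptilde_nonneg (k : ℕ) (Y : ℕ → Type) [∀ i, Fintype (Y i)] [∀ i, Nonempty (Y i)]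
    (P : (∀ i : Fin (k + 1), Y i) → ℝ) (hP : IsPMF P) (n : ℕ)
    (φ : ∀ ℓ : ℕ, (Fin n → Y ℓ) → ℕ → ℕ) (g : (Fin n → Y k) → ℕ → Bool) :
    0 ≤ DeltaCM k Y P n φ g ∧ ∀ ys, 0 ≤ ptildeCM k Y P n φ g ys := by
  have h1 : ∀ ys, 0 ≤ iidK k Y P n ys := fun ys => Finset.prod_nonneg fun t _ => hP.1 _
  have h2 : 0 ≤ DeltaCM k Y P n φ g := by
    unfold DeltaCM probSet
    refine Finset.sum_nonneg fun ω _ => ?_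
    split_ifs
    · exact h1 ω
    · exact le_rfl
  refine ⟨h2, fun ys => ?_⟩
  unfold ptildeCM
  split_ifs
  · exact div_nonneg (h1 _) h2
  · exact le_rfl

lemma first_hop_bound (k : ℕ) (Y : ℕ → Type) [∀ i, Fintype (Y i)] [∀ i, Nonempty (Y i)]
    (P : (∀ i : Fin (k + 1), Y i) → ℝ) (hP : IsPMF P) (n : ℕ) (hn : 0 < n)
    (φ : ∀ ℓ : ℕ, (Fin n → Y ℓ) → ℕ → ℕ) (g : (Fin n → Y k) → ℕ → Bool)
    (hΔ : 0 < DeltaCM k Y P n φ g) :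
    condMIOf (pfullCM k Y P n φ g)
        (fun ω => (fun j : Fin k => ω.1 (idxHi k j) ω.2))
        (UvarCM k Y n φ 0)
        (fun ω => ω.1 ⟨0, Nat.succ_pos k⟩ ω.2)
      ≤ Real.logb 2 (1 / DeltaCM k Y P n φ g) / n := by
  classical
  have h1 : ∀ ys, 0 ≤ iidK k Y P n ys := fun ys => Finset.prod_nonneg fun t _ => hP.1 _
  have key := core_bound n hn (splitEquiv k Y n) (ptildeCM k Y P n φ g)
    (ptilde_nonneg k Y P hP n φ g).2 ?_ (fun a b => P (glueLetter k Y a b)) (fun a b => hP.1 _) ?_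
    (1 / DeltaCM k Y P n φ g) (by positivity) ?_
    (fun x z t => UvarCM k Y n φ 0 ((splitEquiv k Y n).symm (x, z), t)) ?_
  · simp only [Prod.mk.eta, Equiv.symm_apply_apply] at key
    exact key
  · unfold ptildeCM
    have : ∀ ys, (if ys ∈ DsetCM k Y P n φ g then iidK k Y P n ys / DeltaCM k Y P n φ g else 0)
        = (if ys ∈ DsetCM k Y P n φ g then iidK k Y P n ys else 0) / DeltaCM k Y P n φ g := by
      intro ys; split_ifs <;> simp
    simp_rw [this]
    rw [← Finset.sum_div, div_eq_one_iff_eq hΔ.ne']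
    unfold DeltaCM probSet
    exact Finset.sum_congr rfl fun _ _ => by congr
  · rw [← hP.2, ← (glueEquiv k Y).sum_comp, Fintype.sum_prod_type]
    rfl
  · intro ys
    have : ∏ t, P (glueLetter k Y ((splitEquiv k Y n ys).1 t) ((splitEquiv k Y n ys).2 t))
        = iidK k Y P n ys := by
      unfold iidK
      refine Finset.prod_congr rfl fun t _ => congrArg P ?_
      funext i
      induction i using Fin.cases <;> rfl
    dsimp only
    rw [this]
    unfold ptildeCM
    split_ifs
    · rw [div_eq_mul_one_div, mul_comm]
    · exact mul_nonneg (by positivity) (h1 _)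
  · intro x z z' t h
    unfold UvarCM
    refine Prod.ext ?_ (Prod.ext ?_ rfl)
    · rfl
    · funext i s
      simp only [prefixAll]
      split_ifs with hs
      · congr 1
        induction i using Fin.cases with
        | zero => rfl
        | succ j => exact congrFun (h s hs) j
      · rfl

/-- asymptotic Markov chain at the first hop. Under the `K`-hop change of
measure with `liminf_n Δ_k > 0`, and with `U₁ := (M̃₁, Ỹ₀^{T−1},…,Ỹ_k^{T−1}, T)` and
`Ỹ_ℓ := Ỹ_{ℓ,T}`, one has `lim_n I(Ỹ₁,…,Ỹ_k; U₁ | Ỹ₀) = 0`; in particular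
`lim_n I(U₁; Ỹ₁ | Ỹ₀) = 0`. -/
theorem asymptotic_markov_first_hop
    (k : ℕ) (Y : ℕ → Type) [∀ i, Fintype (Y i)] [∀ i, Nonempty (Y i)]
    (hk : 1 ≤ k)
    (P : (∀ i : Fin (k + 1), Y i) → ℝ) (hP : IsPMF P) (hMC : IsMarkovChainK k Y P)
    (φ : ∀ n : ℕ, ∀ ℓ : ℕ, (Fin n → Y ℓ) → ℕ → ℕ)
    (g : ∀ n : ℕ, (Fin n → Y k) → ℕ → Bool)
    (hΔ : 0 < liminf (fun n => DeltaCM k Y P n (φ n) (g n)) atTop) :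
    Tendsto (fun n => condMIOf (pfullCM k Y P n (φ n) (g n))
        (fun ω => (fun j : Fin k => ω.1 (idxHi k j) ω.2))
        (UvarCM k Y n (φ n) 0)
        (fun ω => ω.1 ⟨0, Nat.succ_pos k⟩ ω.2)) atTop (nhds 0) ∧
    Tendsto (fun n => condMIOf (pfullCM k Y P n (φ n) (g n))
        (UvarCM k Y n (φ n) 0)
        (fun ω => ω.1 (idxHi k ⟨0, hk⟩) ω.2)
        (fun ω => ω.1 ⟨0, Nat.succ_pos k⟩ ω.2)) atTop (nhds 0) := by
  set L := liminf (fun n => DeltaCM k Y P n (φ n) (g n)) atTop with hL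
  have hev : ∀ᶠ n in atTop, L / 2 < DeltaCM k Y P n (φ n) (g n) :=
    eventually_lt_of_lt_liminf (by rw [← hL]; linarith)
      (isBoundedUnder_of ⟨0, fun n => (ptilde_nonneg k Y P hP n (φ n) (g n)).1⟩)
  have hlim : Tendsto (fun n : ℕ => Real.logb 2 (1 / (L / 2)) / n) atTop (nhds 0) :=
    tendsto_const_div_atTop_nhds_zero_nat _
  have hp : ∀ n, ∀ ω, 0 ≤ pfullCM k Y P n (φ n) (g n) ω := fun n ω =>
    div_nonneg ((ptilde_nonneg k Y P hP n (φ n) (g n)).2 _) (Nat.cast_nonneg _)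
  have hbd : ∀ᶠ n in atTop, condMIOf (pfullCM k Y P n (φ n) (g n))
        (fun ω => (fun j : Fin k => ω.1 (idxHi k j) ω.2))
        (UvarCM k Y n (φ n) 0)
        (fun ω => ω.1 ⟨0, Nat.succ_pos k⟩ ω.2) ≤ Real.logb 2 (1 / (L / 2)) / n := by
    filter_upwards [hev, eventually_gt_atTop 0] with n h hn
    have hL2 : 0 < L / 2 := by linarith
    refine (first_hop_bound k Y P hP n hn (φ n) (g n) (hL2.trans h)).trans ?_
    refine div_le_div_of_nonneg_right ?_ (Nat.cast_nonneg n)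
    exact Real.logb_le_logb_of_le (by norm_num) (one_div_pos.mpr (hL2.trans h))
      (one_div_le_one_div_of_le hL2 h.le)
  refine ⟨tendsto_of_tendsto_of_tendsto_of_le_of_le' tendsto_const_nhds hlim
    (Eventually.of_forall fun n => condMI_nonneg _ (hp n) _ _ _) hbd,
    tendsto_of_tendsto_of_tendsto_of_le_of_le' tendsto_const_nhds hlim
    (Eventually.of_forall fun n => condMI_nonneg _ (hp n) _ _ _) ?_⟩
  filter_upwards [hbd] with n h
  exact (condMI_data _ (hp n) (fun ω => (fun j : Fin k => ω.1 (idxHi k j) ω.2))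
    (UvarCM k Y n (φ n) 0) (fun ω => ω.1 ⟨0, Nat.succ_pos k⟩ ω.2) (fun z => z ⟨0, hk⟩)).trans h
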